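/- For every n ≥ 2 and every 1 ≤ i ≤ n−1, the automorphisms α_{in} and α_{ni} lie in the kernel K_n of π_n : PΣ_n → PΣ_{n−1}, and moreover K_n is normally generated in PΣ_n by the set { α_{in}, α_{ni} : 1 ≤ i ≤ n−1 } (i.e. K_n is the normal closure in PΣ_n of this set). -/

import Mathlib

open FreeGroup

/-- The free group on `n` generators. -/
abbrev FG (n : ℕ) : Type := FreeGroup (Fin n)

/-- The pure symmetric automorphism group `PΣ_n`: automorphisms sending each
generator to a conjugate of itself. -/
def PSigmaAut (n : ℕ) : Subgroup (MulAut (FG n)) where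
  carrier := {φ | ∀ i : Fin n, ∃ w : FG n, φ (of i) = w * of i * w⁻¹}
  one_mem' := fun i => ⟨1, by simp⟩
  mul_mem' := by
    rintro φ ψ hφ hψ i
    obtain ⟨w, hw⟩ := hψ i
    obtain ⟨v, hv⟩ := hφ i
    refine ⟨φ w * v, ?_⟩
    simp only [MulAut.mul_apply, hw, _root_.map_mul, _root_.map_inv, hv, mul_inv_rev, mul_assoc]
  inv_mem' := by
    intro φ hφ i
    obtain ⟨w, hw⟩ := hφ i
    refine ⟨(φ⁻¹ w)⁻¹, ?_⟩
    refine φ.injective ?_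
    simp only [MulAut.apply_inv_self, _root_.map_mul, _root_.map_inv, inv_inv, hw]
    group

/-- The projection `F_n → F_{n-1}` sending `x_n ↦ 1` and `x_i ↦ x_i` for `i < n-1`. -/
def projHom (n : ℕ) : FG n →* FG (n - 1) :=
  FreeGroup.lift fun i => if h : (i : ℕ) < n - 1 then of (⟨i, h⟩ : Fin (n - 1)) else 1

/-- The inclusion `F_{n-1} → F_n`. -/
def castHom (n : ℕ) : FG (n - 1) →* FG n :=
  FreeGroup.lift fun i => of (Fin.castLE (Nat.sub_le n 1) i)

/-- The endomorphism of `F_{n-1}` induced by an automorphism of `F_n`. -/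
def desc (n : ℕ) (φ : MulAut (FG n)) : FG (n - 1) →* FG (n - 1) :=
  (projHom n).comp ((φ : FG n ≃* FG n).toMonoidHom.comp (castHom n))

lemma desc_proj {n : ℕ} {φ : MulAut (FG n)} (hφ : φ ∈ PSigmaAut n) (x : FG n) :
    desc n φ (projHom n x) = projHom n (φ x) := by
  have : (desc n φ).comp (projHom n) = (projHom n).comp (φ : FG n ≃* FG n).toMonoidHom := by
    apply FreeGroup.ext_hom
    intro i
    by_cases h : (i : ℕ) < n - 1
    · simp only [MonoidHom.comp_apply, projHom, FreeGroup.lift_apply_of, dif_pos h]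
      simp only [desc, MonoidHom.comp_apply, castHom, FreeGroup.lift_apply_of]
      congr 2
    · obtain ⟨w, hw⟩ := hφ i
      simp only [MonoidHom.comp_apply, projHom, FreeGroup.lift_apply_of, dif_neg h,
        MulEquiv.coe_toMonoidHom, hw, _root_.map_mul, _root_.map_inv, _root_.map_one]
      simp
  exact DFunLike.congr_fun this x

lemma desc_mul {n : ℕ} {φ : MulAut (FG n)} (hφ : φ ∈ PSigmaAut n) (ψ : MulAut (FG n)) :
    desc n (φ * ψ) = (desc n φ).comp (desc n ψ) := by
  apply FreeGroup.ext_hom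
  intro i
  simp only [desc, MonoidHom.comp_apply, MulEquiv.coe_toMonoidHom, MulAut.mul_apply]
  exact (desc_proj hφ _).symm

lemma desc_one (n : ℕ) : desc n 1 = MonoidHom.id (FG (n - 1)) := by
  apply FreeGroup.ext_hom
  intro i
  simp only [desc, MonoidHom.comp_apply, MulEquiv.coe_toMonoidHom, MulAut.one_apply,
    castHom, FreeGroup.lift_apply_of, projHom, MonoidHom.id_apply]
  rw [dif_pos (show ((Fin.castLE (Nat.sub_le n 1) i : Fin n) : ℕ) < n - 1 from i.isLt)]
  exact congrArg of (Fin.ext rfl)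

/-- The automorphism of `F_{n-1}` induced by an element of `PΣ_n`. -/
def descAut (n : ℕ) (φ : PSigmaAut n) : MulAut (FG (n - 1)) :=
  MonoidHom.toMulEquiv (desc n ↑φ) (desc n ↑(φ⁻¹))
    (by
      rw [← desc_mul (φ⁻¹).2 ↑φ]
      norm_num [desc_one])
    (by
      rw [← desc_mul φ.2 ↑(φ⁻¹)]
      norm_num [desc_one])

lemma descAut_mem (n : ℕ) (φ : PSigmaAut n) : descAut n φ ∈ PSigmaAut (n - 1) := by
  intro i
  obtain ⟨w, hw⟩ := φ.2 (Fin.castLE (Nat.sub_le n 1) i)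
  refine ⟨projHom n w, ?_⟩
  have : descAut n φ (of i) = projHom n ((φ : MulAut (FG n)) (of (Fin.castLE (Nat.sub_le n 1) i))) := by
    simp only [descAut, MonoidHom.toMulEquiv, MulEquiv.coe_mk, Equiv.coe_fn_mk, desc,
      MonoidHom.comp_apply, MulEquiv.coe_toMonoidHom, castHom, FreeGroup.lift_apply_of]
  rw [this, hw]
  simp only [_root_.map_mul, _root_.map_inv, projHom, FreeGroup.lift_apply_of]
  rw [dif_pos (show ((Fin.castLE (Nat.sub_le n 1) i : Fin n) : ℕ) < n - 1 from i.isLt)]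
  congr 2

/-- The homomorphism `π_n : PΣ_n → PΣ_{n-1}` induced by killing the last generator. -/
def piHom (n : ℕ) : PSigmaAut n →* PSigmaAut (n - 1) :=
  MonoidHom.mk' (fun φ => ⟨descAut n φ, descAut_mem n φ⟩)
    (by
      intro φ ψ
      refine Subtype.ext (MulEquiv.ext fun x => ?_)
      show desc n ↑(φ * ψ) x = (descAut n φ * descAut n ψ) x
      rw [MulAut.mul_apply]
      show _ = desc n ↑φ (desc n ↑ψ x)
      rw [Subgroup.coe_mul, desc_mul φ.2]
      rfl)

/-- The kernel `K_n` of `π_n : PΣ_n → PΣ_{n-1}`. -/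
def Kn (n : ℕ) : Subgroup (PSigmaAut n) := (piHom n).ker

/-- The monoid hom underlying `α_{ij}`: sends `x_i ↦ x_j x_i x_j⁻¹` and fixes the
other generators. -/
def alphaHom (n : ℕ) (i j : Fin n) : FG n →* FG n :=
  FreeGroup.lift fun r => if r = i then of j * of i * (of j)⁻¹ else of r

/-- The inverse of `alphaHom`. -/
def alphaInvHom (n : ℕ) (i j : Fin n) : FG n →* FG n :=
  FreeGroup.lift fun r => if r = i then (of j)⁻¹ * of i * of j else of r

/-- The McCool generator `α_{ij} ∈ Aut(F_n)`, sending `x_i ↦ x_j x_i x_j⁻¹` and fixing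
the other generators (defined to be the identity if `i = j`). -/
def alphaAut (n : ℕ) (i j : Fin n) : MulAut (FG n) :=
  if h : i = j then 1 else
    MonoidHom.toMulEquiv (alphaHom n i j) (alphaInvHom n i j)
      (by
        apply FreeGroup.ext_hom
        intro r
        by_cases hr : r = i
        · subst hr
          simp [alphaHom, alphaInvHom, Ne.symm h, mul_assoc]
        · simp [alphaHom, alphaInvHom, hr])
      (by
        apply FreeGroup.ext_hom
        intro r
        by_cases hr : r = i
        · subst hr
          simp [alphaHom, alphaInvHom, Ne.symm h, mul_assoc]
        · simp [alphaHom, alphaInvHom, hr])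

lemma alphaAut_apply_of (n : ℕ) {i j : Fin n} (hij : i ≠ j) (r : Fin n) :
    alphaAut n i j (of r) = if r = i then of j * of i * (of j)⁻¹ else of r := by
  simp only [alphaAut, dif_neg hij]
  show alphaHom n i j (of r) = _
  simp [alphaHom]

lemma alphaAut_mem (n : ℕ) (i j : Fin n) : alphaAut n i j ∈ PSigmaAut n := by
  by_cases h : i = j
  · simp only [alphaAut, dif_pos h]
    exact (PSigmaAut n).one_mem
  · intro r
    rw [alphaAut_apply_of n h r]
    by_cases hr : r = i
    · subst hr
      exact ⟨of j, by simp⟩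
    · exact ⟨1, by simp [hr]⟩

/-- `α_{ij}` as an element of `PΣ_n`. -/
def alphaP (n : ℕ) (i j : Fin n) : PSigmaAut n := ⟨alphaAut n i j, alphaAut_mem n i j⟩

/-- The letter `x_i^{±1}`. -/
def ltr {n : ℕ} (i : Fin n) (b : Bool) : FG n := FreeGroup.mk [(i, b)]

lemma ltr_inv {n : ℕ} (i : Fin n) (b : Bool) : (ltr i b)⁻¹ = ltr i (!b) := by
  simp [ltr, FreeGroup.inv_mk, FreeGroup.invRev]

lemma ltr_true {n : ℕ} (i : Fin n) : ltr i true = of i := rfl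

lemma ltr_false {n : ℕ} (i : Fin n) : ltr i false = (of i)⁻¹ := by
  rw [← ltr_true, ltr_inv]; rfl

lemma red_append {n : ℕ} {l m : List (Fin n × Bool)} {i : Fin n} {b : Bool}
    (hl : IsReduced l) (hm : IsReduced ((i, b) :: m)) (hend : ∀ c, l.getLast? ≠ some (i, c)) :
    IsReduced (l ++ (i, b) :: m) := by
  unfold FreeGroup.IsReduced at *
  rw [List.isChain_append]
  refine ⟨hl, hm, ?_⟩
  intro x hx y hy
  simp at hy
  subst hy
  obtain ⟨j, c⟩ := x
  intro h
  simp at h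
  subst h
  exact absurd hx (hend c)

lemma map_ltr {n : ℕ} (φ : MulAut (FG n)) (w : Fin n → FG n)
    (hw : ∀ i, φ (of i) = w i * of i * (w i)⁻¹) (i : Fin n) (b : Bool) :
    φ (ltr i b) = w i * ltr i b * (w i)⁻¹ := by
  cases b
  · rw [ltr_false, _root_.map_inv, hw]; group
  · exact hw i

/-- Ping-pong step. -/
lemma ping {n : ℕ} (u g : FG n) (i : Fin n) (b : Bool)
    (hend : ∀ c, u.toWord.getLast? ≠ some (i, c))
    (hg : ¬ (u.toWord ++ [(i, !b)] <+: g.toWord)) :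
    u.toWord ++ [(i, b)] <+: (u * ltr i b * u⁻¹ * g).toWord := by
  have hh : ∀ m, (u⁻¹ * g).toWord ≠ (i, !b) :: m := by
    intro m hm
    apply hg
    have hr : IsReduced ((i, !b) :: m) := hm ▸ isReduced_toWord
    have := red_append (isReduced_toWord (x := u)) hr hend
    have hgw : g.toWord = u.toWord ++ (i, !b) :: m := by
      rw [← this.reduce_eq, ← hm, ← toWord_mul]; simp
    rw [hgw]
    exact ⟨m, by simp⟩
  have hr : IsReduced ((i, b) :: (u⁻¹ * g).toWord) := by
    have h0 := isReduced_toWord (x := u⁻¹ * g)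
    rcases hL : (u⁻¹ * g).toWord with _ | ⟨⟨j, c⟩, m⟩
    · simp [FreeGroup.IsReduced]
    · rw [hL] at h0
      rw [isReduced_cons_cons]
      refine ⟨?_, h0⟩
      rintro h
      simp at h
      subst h
      by_contra hbc
      have : c = !b := by cases b <;> cases c <;> simp_all
      subst this
      exact hh m hL
  have := red_append (isReduced_toWord (x := u)) hr hend
  have h2 : (u * ltr i b * u⁻¹ * g).toWord = u.toWord ++ (i, b) :: (u⁻¹ * g).toWord := by
    have e : u * ltr i b * u⁻¹ * g = FreeGroup.mk (u.toWord ++ [(i, b)] ++ (u⁻¹ * g).toWord) := by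
      rw [← mul_mk, ← mul_mk, mk_toWord, mk_toWord, ltr]; group
    rw [e, toWord_mk, List.append_assoc]
    exact this.reduce_eq
  rw [h2]
  exact ⟨(u⁻¹ * g).toWord, by simp⟩

lemma irreducible_case {n : ℕ} (φ : MulAut (FG n)) (w : Fin n → FG n)
    (hw : ∀ i, φ (of i) = w i * of i * (w i)⁻¹)
    (hend : ∀ i c, (w i).toWord.getLast? ≠ some (i, c))
    (hpre : ∀ i j b, i ≠ j → ¬ ((w j).toWord ++ [(j, b)] <+: (w i).toWord)) : φ = 1 := by
  have hpre' : ∀ i j b, ¬ ((w j).toWord ++ [(j, b)] <+: (w i).toWord) := by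
    intro i j b h
    by_cases hij : i = j
    · subst hij
      have := h.length_le
      simp at this
    · exact hpre i j b hij h
  have hle : ∀ i j b c, (w i).toWord ++ [(i, b)] <+: (w j).toWord ++ [(j, c)] →
      (i, b) = (j, c) := by
    intro i j b c h
    rw [List.prefix_concat_iff] at h
    rcases h with h | h
    · have := (List.append_inj' h rfl).2
      simpa using this
    · exact absurd h (hpre' _ _ _)
  have hdisj : ∀ i j b c (g : FG n), (w i).toWord ++ [(i, b)] <+: g.toWord →
      (w j).toWord ++ [(j, c)] <+: g.toWord → (i, b) = (j, c) := by
    intro i j b c g h1 h2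
    rcases List.prefix_or_prefix_of_prefix h1 h2 with h | h
    · exact hle _ _ _ _ h
    · exact (hle _ _ _ _ h).symm
  have key : ∀ (L : List (Fin n × Bool)) (i : Fin n) (b : Bool), IsReduced ((i, b) :: L) →
      (w i).toWord ++ [(i, b)] <+: (φ (FreeGroup.mk ((i, b) :: L))).toWord := by
    intro L
    induction L with
    | nil =>
      intro i b _
      have h := ping (w i) 1 i b (hend i) (by simp)
      rw [mul_one, ← map_ltr φ w hw] at h
      exact h
    | cons a L ih =>
      obtain ⟨j, c⟩ := a
      intro i b h
      rw [isReduced_cons_cons] at h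
      have h1 := ih j c h.2
      have h2 := ping (w i) (φ (FreeGroup.mk ((j, c) :: L))) i b (hend i) (by
        intro h3
        have := hdisj _ _ _ _ _ h1 h3
        simp only [Prod.mk.injEq] at this
        obtain ⟨rfl, rfl⟩ := this
        have := h.1 rfl
        cases b <;> simp at this)
      rw [← map_ltr φ w hw, ← _root_.map_mul, ltr, mul_mk] at h2
      exact h2
  have hone : ∀ i, φ (of i) = of i := by
    intro i
    have hx : φ (FreeGroup.mk (φ⁻¹ (of i)).toWord) = of i := by
      rw [mk_toWord, MulAut.apply_inv_self]
    have hr := isReduced_toWord (x := φ⁻¹ (of i))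
    rcases hL : (φ⁻¹ (of i)).toWord with _ | ⟨⟨j, c⟩, m⟩
    · rw [hL] at hx
      have : φ 1 = of i := hx
      rw [_root_.map_one] at this
      exact absurd this (one_ne_of i)
    · rw [hL] at hx hr
      have h := key m j c hr
      rw [hx, toWord_of] at h
      have hl := h.length_le
      simp at hl
      rw [hl] at h
      simp at h
      obtain ⟨rfl, rfl⟩ := h
      rw [hw, hl]
      simp
  apply MulEquiv.toMonoidHom_injective
  apply FreeGroup.ext_hom
  intro i
  exact hone i

/-- `α_{ij}^{±1}`. -/
def aP {n : ℕ} (i j : Fin n) (b : Bool) : PSigmaAut n :=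
  if b then alphaP n i j else (alphaP n i j)⁻¹

lemma aP_apply {n : ℕ} {i j : Fin n} (hij : i ≠ j) (b : Bool) (r : Fin n) :
    (aP i j b : MulAut (FG n)) (of r) =
      if r = i then ltr j b * of i * (ltr j b)⁻¹ else of r := by
  cases b
  · have : ((aP i j false : PSigmaAut n) : MulAut (FG n)) = (alphaAut n i j)⁻¹ := rfl
    rw [this]
    apply (alphaAut n i j).injective
    rw [MulAut.apply_inv_self]
    split_ifs with h
    · subst h
      simp only [ltr_false, _root_.map_mul, _root_.map_inv, alphaAut_apply_of n hij, if_neg hij.symm]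
      simp; group
    · simp [alphaAut_apply_of n hij, h]
  · exact alphaAut_apply_of n hij r

lemma generated {n : ℕ} (N : ℕ) : ∀ (φ : PSigmaAut n) (w : Fin n → FG n)
    (_ : ∀ i, (φ : MulAut (FG n)) (of i) = w i * of i * (w i)⁻¹) (_ : ∑ i, (w i).norm ≤ N),
    φ ∈ Subgroup.closure {g | ∃ i j : Fin n, i ≠ j ∧ g = alphaP n i j} := by
  induction N using Nat.strong_induction_on with
  | _ N ih =>
  intro φ w hw hN
  have upd : ∀ (i : Fin n) (v : FG n), v.norm < (w i).norm →
      ∑ k, (Function.update w i v k).norm < N := by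
    intro i v hv
    refine lt_of_lt_of_le (Finset.sum_lt_sum ?_ ⟨i, Finset.mem_univ _, by simpa using hv⟩) hN
    intro k _
    by_cases hk : k = i
    · subst hk; simpa using hv.le
    · simp [hk]
  by_cases h1 : ∃ i c, (w i).toWord.getLast? = some (i, c)
  · obtain ⟨i, c, h⟩ := h1
    rw [List.getLast?_eq_some_iff] at h
    obtain ⟨l, hl⟩ := h
    have hwi : w i = FreeGroup.mk l * ltr i c := by
      rw [ltr, mul_mk, ← hl, mk_toWord]
    have hlt : (FreeGroup.mk l).norm < (w i).norm := by
      refine lt_of_le_of_lt norm_mk_le ?_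
      simp [FreeGroup.norm, hl]
    refine ih _ (upd i _ hlt) φ (Function.update w i (FreeGroup.mk l)) ?_ le_rfl
    intro k
    by_cases hk : k = i
    · subst hk
      rw [hw, hwi]
      simp only [Function.update_self]
      cases c
      · rw [ltr_false]; group
      · rw [ltr_true]; group
    · simp [hk, hw]
  by_cases h2 : ∃ i j b, i ≠ j ∧ ((w j).toWord ++ [(j, b)] <+: (w i).toWord)
  · obtain ⟨i, j, b, hij, t, ht⟩ := h2
    have hwi : w i = w j * ltr j b * FreeGroup.mk t := by
      conv_lhs => rw [← mk_toWord (x := w i), ← ht, ← mul_mk, ← mul_mk, mk_toWord]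
      rfl
    have hlt : (w j * FreeGroup.mk t).norm < (w i).norm := by
      refine lt_of_le_of_lt (norm_mul_le _ _) ?_
      have := norm_mk_le (L₁ := t)
      have h3 : (w i).norm = (w j).norm + 1 + t.length := by
        simp only [FreeGroup.norm, ← ht]; simp; omega
      omega
    have hmem := ih _ (upd i _ hlt) (φ * aP i j (!b))
      (Function.update w i (w j * FreeGroup.mk t)) (by
        intro k
        rw [Subgroup.coe_mul, MulAut.mul_apply, aP_apply hij]
        split_ifs with hk
        · subst hk
          simp only [_root_.map_mul, _root_.map_inv, map_ltr _ w hw, hw, Function.update_self]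
          rw [hwi, ← ltr_inv]
          group
        · simp [hk, hw]) le_rfl
    have ha : aP i j (!b) ∈ Subgroup.closure {g | ∃ i j : Fin n, i ≠ j ∧ g = alphaP n i j} := by
      have : alphaP n i j ∈ Subgroup.closure {g | ∃ i j : Fin n, i ≠ j ∧ g = alphaP n i j} :=
        Subgroup.subset_closure ⟨i, j, hij, rfl⟩
      cases b
      · exact this
      · exact inv_mem this
    exact (Subgroup.mul_mem_cancel_right _ ha).1 hmem
  · push Not at h1 h2
    have : φ = 1 := Subtype.ext (irreducible_case _ w hw h1 h2)
    rw [this]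
    exact one_mem _

lemma generated_top (n : ℕ) :
    Subgroup.closure {g | ∃ i j : Fin n, i ≠ j ∧ g = alphaP n i j} = ⊤ := by
  rw [eq_top_iff]
  intro φ _
  choose w hw using φ.2
  exact generated _ φ w hw le_rfl

lemma mem_Kn {n : ℕ} (φ : PSigmaAut n) : φ ∈ Kn n ↔ desc n φ = MonoidHom.id _ := by
  rw [Kn, MonoidHom.mem_ker]
  constructor
  · intro h
    ext1 x
    have := congrArg (fun f : PSigmaAut (n - 1) => (f : MulAut (FG (n - 1))) (of x)) h
    exact this
  · intro h
    refine Subtype.ext (MulEquiv.ext fun x => ?_)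
    exact DFunLike.congr_fun h x

lemma castHom_of (n : ℕ) (i : Fin (n - 1)) :
    castHom n (of i) = of (Fin.castLE (Nat.sub_le n 1) i) := by
  simp [castHom]

lemma proj_cast (n : ℕ) (x : FG (n - 1)) : projHom n (castHom n x) = x :=
  DFunLike.congr_fun (desc_one n) x

lemma proj_last (n : ℕ) (h : n - 1 < n) : projHom n (of ⟨n - 1, h⟩) = 1 := by
  simp [projHom]

lemma cases_last {n : ℕ} (r : Fin n) (h : n - 1 < n) :
    r = ⟨n - 1, h⟩ ∨ ∃ i : Fin (n - 1), r = Fin.castLE (Nat.sub_le n 1) i := by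
  by_cases hr : (r : ℕ) < n - 1
  · exact Or.inr ⟨⟨r, hr⟩, rfl⟩
  · left; ext; simp; omega

lemma cast_ne_last {n : ℕ} (i : Fin (n - 1)) (h : n - 1 < n) :
    Fin.castLE (Nat.sub_le n 1) i ≠ ⟨n - 1, h⟩ := by
  intro e
  have := congrArg Fin.val e
  have := i.2
  simp at *
  omega

/-- Automorphisms in the image of the natural section. -/
def secSub (n : ℕ) (h : n - 1 < n) : Subgroup (PSigmaAut n) where
  carrier := {φ | (φ : MulAut (FG n)) (of ⟨n - 1, h⟩) = of ⟨n - 1, h⟩ ∧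
    ∀ x, (φ : MulAut (FG n)) (castHom n x) = castHom n (desc n φ x)}
  one_mem' := ⟨rfl, fun x => by rw [OneMemClass.coe_one, desc_one]; rfl⟩
  mul_mem' := by
    rintro a b ⟨ha, ha'⟩ ⟨hb, hb'⟩
    refine ⟨by rw [Subgroup.coe_mul, MulAut.mul_apply, hb, ha], fun x => ?_⟩
    rw [Subgroup.coe_mul, MulAut.mul_apply, hb', ha', desc_mul a.2]
    rfl
  inv_mem' := by
    rintro a ⟨ha, ha'⟩
    refine ⟨?_, fun x => ?_⟩
    · apply (a : MulAut (FG n)).injective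
      rw [InvMemClass.coe_inv, MulAut.apply_inv_self, ha]
    · apply (a : MulAut (FG n)).injective
      rw [InvMemClass.coe_inv, MulAut.apply_inv_self, ha']
      have e := desc_mul a.2 ((a : MulAut (FG n))⁻¹)
      rw [mul_inv_cancel, desc_one] at e
      exact congrArg (castHom n) (DFunLike.congr_fun e x)

lemma alpha_mem_secSub {n : ℕ} (h : n - 1 < n) (i j : Fin (n - 1)) (hij : i ≠ j) :
    alphaP n (Fin.castLE (Nat.sub_le n 1) i) (Fin.castLE (Nat.sub_le n 1) j) ∈ secSub n h := by
  have hne : Fin.castLE (Nat.sub_le n 1) i ≠ Fin.castLE (Nat.sub_le n 1) j := by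
    intro e; exact hij (Fin.castLE_injective _ e)
  refine ⟨?_, fun x => ?_⟩
  · show alphaAut n _ _ _ = _
    rw [alphaAut_apply_of n hne, if_neg (cast_ne_last i h).symm]
  · show alphaAut n _ _ _ = castHom n (desc n (alphaAut n _ _) x)
    have : (alphaAut n (Fin.castLE (Nat.sub_le n 1) i)
        (Fin.castLE (Nat.sub_le n 1) j)).toMonoidHom.comp (castHom n) =
        (castHom n).comp (desc n (alphaAut n (Fin.castLE (Nat.sub_le n 1) i)
        (Fin.castLE (Nat.sub_le n 1) j))) := by
      apply FreeGroup.ext_hom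
      intro r
      have e : alphaAut n (Fin.castLE (Nat.sub_le n 1) i) (Fin.castLE (Nat.sub_le n 1) j)
          (castHom n (of r)) = castHom n (if r = i then of j * of i * (of j)⁻¹ else of r) := by
        rw [castHom_of, alphaAut_apply_of n hne]
        by_cases hr : r = i
        · simp [hr, castHom_of]
        · have : Fin.castLE (Nat.sub_le n 1) r ≠ Fin.castLE (Nat.sub_le n 1) i := by
            intro e; exact hr (Fin.castLE_injective _ e)
          simp [hr, this, castHom_of]
      show alphaAut n _ _ (castHom n (of r)) =
        castHom n (projHom n (alphaAut n _ _ (castHom n (of r))))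
      rw [e, proj_cast]
    exact DFunLike.congr_fun this x

lemma alpha_in_Kn (n : ℕ) (h : n - 1 < n) (i : Fin (n - 1)) :
    alphaP n (Fin.castLE (Nat.sub_le n 1) i) ⟨n - 1, h⟩ ∈ Kn n ∧
    alphaP n ⟨n - 1, h⟩ (Fin.castLE (Nat.sub_le n 1) i) ∈ Kn n := by
  have hne := cast_ne_last i h
  constructor
  · rw [mem_Kn]
    apply FreeGroup.ext_hom
    intro r
    show projHom n (alphaAut n _ _ (castHom n (of r))) = of r
    rw [castHom_of, alphaAut_apply_of n hne]
    split_ifs with hr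
    · simp only [_root_.map_mul, _root_.map_inv, proj_last]
      rw [← hr, ← castHom_of, proj_cast]; simp
    · rw [← castHom_of, proj_cast]
  · rw [mem_Kn]
    apply FreeGroup.ext_hom
    intro r
    show projHom n (alphaAut n _ _ (castHom n (of r))) = of r
    rw [castHom_of, alphaAut_apply_of n hne.symm, if_neg (cast_ne_last r h), ← castHom_of,
      proj_cast]

lemma secSub_inf {n : ℕ} (h : n - 1 < n) (φ : PSigmaAut n) (h1 : φ ∈ secSub n h)
    (h2 : φ ∈ Kn n) : φ = 1 := by
  rw [mem_Kn] at h2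
  apply Subtype.ext
  apply MulEquiv.toMonoidHom_injective
  apply FreeGroup.ext_hom
  intro r
  show (φ : MulAut (FG n)) (of r) = of r
  rcases cases_last r h with rfl | ⟨i, rfl⟩
  · exact h1.1
  · rw [← castHom_of, h1.2, h2]; rfl

/-- STATEMENT 17: For every `n ≥ 2` and every `1 ≤ i ≤ n - 1`, the automorphisms `α_{in}`
and `α_{ni}` lie in `K_n`, and `K_n` is the normal closure in `PΣ_n` of
`{ α_{in}, α_{ni} : 1 ≤ i ≤ n - 1 }`. -/
theorem statement17 (n : ℕ) (hn : 2 ≤ n) :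
    (∀ i : Fin (n - 1),
        alphaP n (Fin.castLE (Nat.sub_le n 1) i) ⟨n - 1, by omega⟩ ∈ Kn n ∧
        alphaP n ⟨n - 1, by omega⟩ (Fin.castLE (Nat.sub_le n 1) i) ∈ Kn n) ∧
    Kn n = Subgroup.normalClosure {g : ↥(PSigmaAut n) |
      ∃ i : Fin (n - 1),
        g = alphaP n (Fin.castLE (Nat.sub_le n 1) i) ⟨n - 1, by omega⟩ ∨
          g = alphaP n ⟨n - 1, by omega⟩ (Fin.castLE (Nat.sub_le n 1) i)} := by
  have h : n - 1 < n := by omega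
  refine ⟨alpha_in_Kn n h, le_antisymm ?_ ?_⟩
  · set N := Subgroup.normalClosure {g : ↥(PSigmaAut n) |
      ∃ i : Fin (n - 1),
        g = alphaP n (Fin.castLE (Nat.sub_le n 1) i) ⟨n - 1, by omega⟩ ∨
          g = alphaP n ⟨n - 1, by omega⟩ (Fin.castLE (Nat.sub_le n 1) i)} with hN
    have hNK : N ≤ Kn n := by
      have : (Kn n).Normal := by unfold Kn; infer_instance
      apply Subgroup.normalClosure_le_normal
      rintro g ⟨i, rfl | rfl⟩
      · exact (alpha_in_Kn n h i).1
      · exact (alpha_in_Kn n h i).2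
    have : N.Normal := Subgroup.normalClosure_normal
    have htop : secSub n h ⊔ N = ⊤ := by
      rw [eq_top_iff, ← generated_top n, Subgroup.closure_le]
      rintro g ⟨i, j, hij, rfl⟩
      rcases cases_last i h with rfl | ⟨i, rfl⟩ <;> rcases cases_last j h with rfl | ⟨j, rfl⟩
      · exact absurd rfl hij
      · exact (le_sup_right : N ≤ _) (Subgroup.subset_normalClosure ⟨j, Or.inr rfl⟩)
      · exact (le_sup_right : N ≤ _) (Subgroup.subset_normalClosure ⟨i, Or.inl rfl⟩)
      · exact (le_sup_left : secSub n h ≤ _)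
          (alpha_mem_secSub h i j (fun e => hij (by rw [e])))
    intro g hg
    have : g ∈ secSub n h ⊔ N := by rw [htop]; trivial
    rw [Subgroup.mem_sup_of_normal_right] at this
    obtain ⟨y, hy, z, hz, rfl⟩ := this
    have hyK : y ∈ Kn n := (Subgroup.mul_mem_cancel_right _ (hNK hz)).1 hg
    rw [secSub_inf h y hy hyK, one_mul]
    exact hz
  · have : (Kn n).Normal := by unfold Kn; infer_instance
    apply Subgroup.normalClosure_le_normal
    rintro g ⟨i, rfl | rfl⟩
    · exact (alpha_in_Kn n h i).1
    · exact (alpha_in_Kn n h i).2
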